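/- Let Γ be a flat orthogonal drawing of a finite simple planar graph G. Then there exists a poly-line drawing Γ' of G with the same y-coordinates as Γ, the same left-to-right order in each row, and width no larger than the width of Γ; moreover, if Γ is y-monotone then Γ' is y-monotone. In particular, Γ' has the same height as Γ. -/

import Mathlib

open Set

/-- A point in the plane. -/
abbrev Pt : Type := ℝ × ℝ

/-- A point has integer coordinates. -/
def IsIntPt (p : Pt) : Prop := (∃ a : ℤ, p.1 = (a : ℝ)) ∧ (∃ b : ℤ, p.2 = (b : ℝ))

/-- The (closed) segments of a polygonal chain, as pairs of consecutive corners. -/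
def chainSegs (l : List Pt) : List (Pt × Pt) := l.zip l.tail

/-- The set of points covered by a polygonal chain. -/
def chainSet (l : List Pt) : Set Pt := ⋃ s ∈ chainSegs l, segment ℝ s.1 s.2

/-- A polygonal chain is simple (non-self-intersecting): it has at least two
corners, all corners are distinct, and two of its segments meet only if they are
consecutive, and then only in their shared corner. -/
def IsSimpleChain (l : List Pt) : Prop :=
  2 ≤ l.length ∧ l.Nodup ∧
    ∀ i j : ℕ, i < j → ∀ (hi : i < (chainSegs l).length) (hj : j < (chainSegs l).length),
      segment ℝ ((chainSegs l).get ⟨i, hi⟩).1 ((chainSegs l).get ⟨i, hi⟩).2 ∩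
        segment ℝ ((chainSegs l).get ⟨j, hj⟩).1 ((chainSegs l).get ⟨j, hj⟩).2 ⊆
        if j = i + 1 then {((chainSegs l).get ⟨j, hj⟩).1} else (∅ : Set Pt)

/-- Every interior corner of the chain is a genuine bend (a direction change). -/
def GenuineBends (l : List Pt) : Prop :=
  ∀ i : ℕ, ∀ h : i + 2 < l.length,
    ¬ Collinear ℝ ({l.get ⟨i, by omega⟩, l.get ⟨i + 1, by omega⟩, l.get ⟨i + 2, h⟩} : Set Pt)

/-- The chain is a y-monotone path (horizontal segments allowed). -/
def IsMonoChain (l : List Pt) : Prop :=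
  (l.map Prod.snd).Chain' (· ≤ ·) ∨ (l.map Prod.snd).Chain' (fun a b => b ≤ a)

/-- All segments of the chain are horizontal or vertical. -/
def IsOrthoChain (l : List Pt) : Prop :=
  ∀ s ∈ chainSegs l, s.1.1 = s.2.1 ∨ s.1.2 = s.2.2

/-- A poly-line drawing of a graph `G`: every vertex is a point, and every edge
`uv` is the polygonal chain through the list `bends u v` of bend points
(listed in order from `u` to `v`). -/
structure PolylineDrawing {V : Type*} (G : SimpleGraph V) where
  pos : V → Pt
  bends : V → V → List Pt
  bends_symm : ∀ u v, bends v u = (bends u v).reverse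

namespace PolylineDrawing

variable {V : Type*} {G : SimpleGraph V}

/-- The corner list of the curve of edge `uv`. -/
def chain (D : PolylineDrawing G) (u v : V) : List Pt :=
  D.pos u :: (D.bends u v ++ [D.pos v])

/-- The set of points of the curve of edge `uv`. -/
def curve (D : PolylineDrawing G) (u v : V) : Set Pt := chainSet (D.chain u v)

/-- The defining elements of the drawing: vertex points and bends. -/
def points (D : PolylineDrawing G) : Set Pt :=
  Set.range D.pos ∪ ⋃ (u) (v) (_ : G.Adj u v), {p | p ∈ D.bends u v}

/-- The drawing is planar: vertex points are pairwise distinct, every edge curve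
is a simple chain whose interior corners are genuine bends, an edge curve contains
no vertex point other than its endpoints, and two distinct edge curves intersect
only in points of common endpoints. -/
def IsPlanar (D : PolylineDrawing G) : Prop :=
  Function.Injective D.pos ∧
  (∀ u v, G.Adj u v → IsSimpleChain (D.chain u v) ∧ GenuineBends (D.chain u v)) ∧
  (∀ u v w, G.Adj u v → w ≠ u → w ≠ v → D.pos w ∉ D.curve u v) ∧
  (∀ u v x y, G.Adj u v → G.Adj x y → s(u, v) ≠ s(x, y) →
    D.curve u v ∩ D.curve x y ⊆ D.pos '' (({u, v} : Set V) ∩ ({x, y} : Set V)))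

/-- All defining elements have integer coordinates. -/
def IntCoords (D : PolylineDrawing G) : Prop := ∀ p ∈ D.points, IsIntPt p

/-- A straight-line drawing: no edge has bends. -/
def IsStraightLine (D : PolylineDrawing G) : Prop := ∀ u v : V, D.bends u v = []

/-- Every edge curve is a y-monotone path. -/
def IsYMonotone (D : PolylineDrawing G) : Prop :=
  ∀ u v, G.Adj u v → IsMonoChain (D.chain u v)

/-- The drawing fits (after translation) in the rows `1, …, h`. -/
def InHeight (D : PolylineDrawing G) (h : ℕ) : Prop :=
  ∃ y0 : ℤ, ∀ p ∈ D.points, (y0 : ℝ) ≤ p.2 ∧ p.2 ≤ (y0 : ℝ) + (h : ℝ) - 1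

/-- The drawing fits (after translation) in the columns `1, …, w`. -/
def InWidth (D : PolylineDrawing G) (w : ℕ) : Prop :=
  ∃ x0 : ℤ, ∀ p ∈ D.points, (x0 : ℝ) ≤ p.1 ∧ p.1 ≤ (x0 : ℝ) + (w : ℝ) - 1

end PolylineDrawing

/-- An axis-parallel box (possibly degenerated to a segment or a point). -/
structure Box where
  x1 : ℝ
  x2 : ℝ
  y1 : ℝ
  y2 : ℝ
  hx : x1 ≤ x2
  hy : y1 ≤ y2

/-- The set of points of a box. -/
def Box.pts (b : Box) : Set Pt := Set.Icc b.x1 b.x2 ×ˢ Set.Icc b.y1 b.y2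

/-- An orthogonal drawing of a graph `G`: every vertex is an axis-aligned box, and
every edge `uv` is an axis-parallel polygonal chain `chain u v` (its first corner is
the attachment point on the box of `u`, its last corner the attachment point on the
box of `v`). -/
structure OrthDrawing {V : Type*} (G : SimpleGraph V) where
  box : V → Box
  chain : V → V → List Pt
  chain_symm : ∀ u v, chain v u = (chain u v).reverse

namespace OrthDrawing

variable {V : Type*} {G : SimpleGraph V}

/-- The set of points of the curve of edge `uv`. -/
def curve (D : OrthDrawing G) (u v : V) : Set Pt := chainSet (D.chain u v)

/-- The defining elements of the drawing: corners of vertex boxes, and corners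
(attachment points and bends) of edge chains. -/
def points (D : OrthDrawing G) : Set Pt :=
  (⋃ v, ({((D.box v).x1, (D.box v).y1), ((D.box v).x1, (D.box v).y2),
          ((D.box v).x2, (D.box v).y1), ((D.box v).x2, (D.box v).y2)} : Set Pt)) ∪
    ⋃ (u) (v) (_ : G.Adj u v), {p | p ∈ D.chain u v}

/-- All points covered by the drawing (boxes and edge curves). -/
def region (D : OrthDrawing G) : Set Pt :=
  (⋃ v, (D.box v).pts) ∪ ⋃ (u) (v) (_ : G.Adj u v), D.curve u v

/-- The drawing is planar: vertex boxes are pairwise disjoint; every edge curve is a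
simple axis-parallel chain, with genuine bends, joining the boxes of its endpoints;
an edge curve meets a vertex box only in its attachment points; and two distinct
edge curves intersect only in common endpoints. -/
def IsPlanar (D : OrthDrawing G) : Prop :=
  (∀ u v : V, u ≠ v → Disjoint (D.box u).pts (D.box v).pts) ∧
  (∀ u v, G.Adj u v → IsSimpleChain (D.chain u v) ∧ IsOrthoChain (D.chain u v) ∧
      GenuineBends (D.chain u v)) ∧
  (∀ u v, G.Adj u v → ∃ p q l, D.chain u v = p :: (l ++ [q]) ∧
      p ∈ (D.box u).pts ∧ q ∈ (D.box v).pts) ∧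
  (∀ u v w, G.Adj u v → D.curve u v ∩ (D.box w).pts ⊆
      {p | (w = u ∧ (D.chain u v).head? = some p) ∨
           (w = v ∧ (D.chain u v).getLast? = some p)}) ∧
  (∀ u v x y, G.Adj u v → G.Adj x y → s(u, v) ≠ s(x, y) →
      D.curve u v ∩ D.curve x y ⊆
        {p | ((D.chain u v).head? = some p ∨ (D.chain u v).getLast? = some p) ∧
             ((D.chain x y).head? = some p ∨ (D.chain x y).getLast? = some p)})

/-- A flat drawing: every vertex box is degenerated to a horizontal segment. -/
def IsFlat (D : OrthDrawing G) : Prop := ∀ v, (D.box v).y1 = (D.box v).y2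

/-- A visibility representation: an orthogonal drawing without bends, i.e. every
edge is a single horizontal or vertical segment. -/
def IsVR (D : OrthDrawing G) : Prop := ∀ u v, G.Adj u v → (D.chain u v).length = 2

/-- Every edge curve is a y-monotone path. -/
def IsYMonotone (D : OrthDrawing G) : Prop := ∀ u v, G.Adj u v → IsMonoChain (D.chain u v)

/-- All defining elements have integer coordinates. -/
def IntCoords (D : OrthDrawing G) : Prop := ∀ p ∈ D.points, IsIntPt p

/-- The drawing fits (after translation) in the rows `1, …, h`. -/
def InHeight (D : OrthDrawing G) (h : ℕ) : Prop :=
  ∃ y0 : ℤ, ∀ p ∈ D.points, (y0 : ℝ) ≤ p.2 ∧ p.2 ≤ (y0 : ℝ) + (h : ℝ) - 1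

/-- The drawing fits (after translation) in the columns `1, …, w`. -/
def InWidth (D : OrthDrawing G) (w : ℕ) : Prop :=
  ∃ x0 : ℤ, ∀ p ∈ D.points, (x0 : ℝ) ≤ p.1 ∧ p.1 ≤ (x0 : ℝ) + (w : ℝ) - 1

end OrthDrawing

/-!
Split every edge of the given drawing into unit steps between lattice points. Then contract the
segment of each vertex to its left end, leave all other lattice points where they are, and redraw
each unit step as the straight segment between the images of its ends; corners that become flat
are dropped. This moves lattice points only inside their rows and preserves the left-to-right
order in each row weakly. Hence two redrawn unit steps meet only in common images of their
ends, or else have the same two ends. Since a lattice point lying on an edge and on a vertex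
segment is an attachment point, two lattice points with the same image belong to a common vertex,
and planarity carries over.
-/

lemma exists_equivariant_choice {V β : Type*} {σ : β → β} (hσ : σ.Involutive) {c : β}
    (hc : σ c = c) {P : V → V → β → Prop} (hP : ∀ u v b, P u v b → P v u (σ b))
    (h : ∀ u v, ∃ b, P u v b) :
    ∃ b : V → V → β, (∀ u v, b v u = σ (b u v)) ∧ ∀ u v, u ≠ v → P u v (b u v) := by
  classical
  let : LinearOrder V := linearOrderOfSTO WellOrderingRel
  choose b hb using h
  refine ⟨fun u v => if u < v then b u v else if v < u then σ (b v u) else c,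
    fun u v => ?_, fun u v huv => ?_⟩
  · rcases lt_trichotomy u v with huv | rfl | huv
    · simp [huv, huv.not_gt]
    · simp [hc]
    · simp [huv, huv.not_gt, hσ (b v u)]
  · rcases huv.lt_or_gt with hlt | hlt
    · simpa [hlt] using hb u v
    · simpa [hlt, hlt.not_gt] using hP v u _ (hb v u)

lemma map_mem_Icc_of_mem_convexHull {E : Type*} [AddCommGroup E] [Module ℝ E] (f : E →ₗ[ℝ] ℝ)
    {S : Set E} {a b : ℝ} (h : ∀ p ∈ S, f p ∈ Icc a b) {p : E} (hp : p ∈ convexHull ℝ S) :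
    f p ∈ Icc a b :=
  convexHull_min h ((convex_Icc a b).linear_preimage f) hp

/-! ### Polygonal chains -/

lemma chainSegs_cons_cons (p q : Pt) (l : List Pt) :
    chainSegs (p :: q :: l) = (p, q) :: chainSegs (q :: l) := rfl

lemma chainSet_singleton (p : Pt) : chainSet [p] = ∅ := by
  simp [chainSet, chainSegs]

lemma chainSet_cons_cons (p q : Pt) (l : List Pt) :
    chainSet (p :: q :: l) = segment ℝ p q ∪ chainSet (q :: l) := by
  simp [chainSet, chainSegs_cons_cons]

lemma chainSet_append_cons (p : Pt) (t : List Pt) :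
    ∀ s : List Pt, chainSet (s ++ p :: t) = chainSet (s ++ [p]) ∪ chainSet (p :: t)
  | [] => by simp [chainSet_singleton]
  | [a] => by simp [chainSet_cons_cons, chainSet_singleton]
  | a :: b :: s => by
    have ih := chainSet_append_cons p t (b :: s)
    simp only [List.cons_append, chainSet_cons_cons, union_assoc] at ih ⊢
    rw [ih]

lemma mem_chainSet_of_mem : ∀ {l : List Pt} {p : Pt}, 2 ≤ l.length → p ∈ l → p ∈ chainSet l
  | [_, b], p, _, hp => by
    rw [chainSet_cons_cons]
    rcases List.mem_pair.1 hp with rfl | rfl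
    exacts [.inl (left_mem_segment ℝ _ _), .inl (right_mem_segment ℝ _ _)]
  | a :: b :: c :: l, p, _, hp => by
    rw [chainSet_cons_cons]
    rcases List.mem_cons.1 hp with rfl | hp
    exacts [.inl (left_mem_segment ℝ _ _), .inr (mem_chainSet_of_mem (by simp) hp)]

lemma chainSet_subset_of_convex {S : Set Pt} (hS : Convex ℝ S) :
    ∀ {l : List Pt}, (∀ p ∈ l, p ∈ S) → chainSet l ⊆ S
  | [], _ => by simp [chainSet, chainSegs]
  | [p], _ => by simp [chainSet_singleton]
  | p :: q :: l, h => by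
    rw [chainSet_cons_cons]
    exact union_subset (hS.segment_subset (h p (by simp)) (h q (by simp)))
      (chainSet_subset_of_convex hS fun x hx => h x (List.mem_cons_of_mem _ hx))

lemma exists_mem_segment_of_mem_chainSet_map {α : Type*} {R : α → α → Prop} {g : α → Pt} {z : Pt} :
    ∀ {P : List α}, P.IsChain R → z ∈ chainSet (P.map g) →
      ∃ c ∈ P, ∃ d ∈ P, R c d ∧ z ∈ segment ℝ (g c) (g d)
  | [], _, hz => by simp [chainSet, chainSegs] at hz
  | [a], _, hz => by simp [chainSet_singleton] at hz
  | a :: b :: P, hP, hz => by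
    obtain ⟨hab, hP⟩ := List.isChain_cons_cons.1 hP
    rcases (chainSet_cons_cons _ _ _).subset hz with hz | hz
    · exact ⟨a, by simp, b, by simp, hab, hz⟩
    · obtain ⟨c, hc, d, hd, hcd, hz⟩ := exists_mem_segment_of_mem_chainSet_map hP hz
      exact ⟨c, List.mem_cons_of_mem _ hc, d, List.mem_cons_of_mem _ hd, hcd, hz⟩

lemma mem_chainSet_iff {l : List Pt} {z : Pt} : z ∈ chainSet l ↔
    ∃ s : Fin (chainSegs l).length,
      z ∈ segment ℝ ((chainSegs l).get s).1 ((chainSegs l).get s).2 := by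
  simp only [chainSet, mem_iUnion, List.mem_iff_get, exists_prop]
  constructor
  · rintro ⟨_, ⟨s, rfl⟩, hz⟩
    exact ⟨s, hz⟩
  · rintro ⟨s, hz⟩
    exact ⟨_, ⟨s, rfl⟩, hz⟩

lemma isOrthoChain_iff_isChain :
    ∀ {l : List Pt}, IsOrthoChain l ↔ l.IsChain fun p q => p.1 = q.1 ∨ p.2 = q.2
  | [] => by simp [IsOrthoChain, chainSegs]
  | [p] => by simp [IsOrthoChain, chainSegs]
  | p :: q :: l => by
    rw [List.isChain_cons_cons, ← isOrthoChain_iff_isChain]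
    simp [IsOrthoChain, chainSegs_cons_cons]

lemma isMonoChain_iff_isChain {l : List Pt} :
    IsMonoChain l ↔ (l.IsChain fun p q => p.2 ≤ q.2) ∨ l.IsChain fun p q => q.2 ≤ p.2 := by
  unfold IsMonoChain
  exact or_congr (List.isChain_map _) (List.isChain_map _)

lemma IsSimpleChain.tail {p q : Pt} {t : List Pt} (h : IsSimpleChain (p :: q :: t))
    (ht : t ≠ []) : IsSimpleChain (q :: t) := by
  obtain ⟨-, hnd, hmeet⟩ := h
  have hlen : 2 ≤ (q :: t).length := Nat.succ_le_succ (List.length_pos_iff.2 ht)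
  refine ⟨hlen, hnd.of_cons, fun i j hij hi hj => ?_⟩
  simpa [chainSegs_cons_cons] using hmeet (i + 1) (j + 1) (by omega)
    (by simpa [chainSegs_cons_cons] using hi) (by simpa [chainSegs_cons_cons] using hj)

lemma IsSimpleChain.eq_of_mem_segment {p q z : Pt} {t : List Pt}
    (h : IsSimpleChain (p :: q :: t)) (hz : z ∈ segment ℝ p q) (hz' : z ∈ chainSet (q :: t)) :
    z = q := by
  obtain ⟨⟨j, hj⟩, hz'⟩ := mem_chainSet_iff.1 hz'
  have := h.2.2 0 (j + 1) (by omega) (by simp [chainSegs_cons_cons])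
    (by simpa [chainSegs_cons_cons] using hj) ⟨hz, hz'⟩
  split_ifs at this with hj0
  · obtain rfl : j = 0 := by omega
    obtain _ | ⟨r, t⟩ := t
    · simp [chainSegs] at hj
    · exact this
  · exact this.elim

lemma IsSimpleChain.head_notMem {q r : Pt} {t : List Pt} (h : IsSimpleChain (q :: r :: t)) :
    q ∉ chainSet (r :: t) := fun hq =>
  (List.nodup_cons.1 h.2.1).1
    (h.eq_of_mem_segment (left_mem_segment ℝ q r) hq ▸ List.mem_cons_self)

lemma IsSimpleChain.cons {p q : Pt} {t : List Pt} (h : IsSimpleChain (q :: t)) (hpq : p ≠ q)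
    (hmeet : ∀ z ∈ segment ℝ p q, z ∈ chainSet (q :: t) → z = q) :
    IsSimpleChain (p :: q :: t) := by
  have hp : p ∉ q :: t := fun hp =>
    hpq (hmeet p (left_mem_segment ℝ _ _) (mem_chainSet_of_mem h.1 hp))
  refine ⟨by simp, List.nodup_cons.2 ⟨hp, h.2.1⟩, fun i j hij hi hj => ?_⟩
  obtain ⟨j, rfl⟩ : ∃ k, j = k + 1 := ⟨j - 1, by omega⟩
  have hj' : j < (chainSegs (q :: t)).length := by simpa [chainSegs_cons_cons] using hj
  obtain _ | i := i
  · rintro z ⟨hz, hz'⟩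
    obtain rfl : z = q := hmeet z hz (mem_chainSet_iff.2 ⟨⟨j, hj'⟩, hz'⟩)
    obtain _ | ⟨r, t⟩ := t
    · simp [chainSegs] at hj'
    obtain _ | j := j
    · simp [chainSegs_cons_cons]
    · exact absurd (mem_chainSet_iff.2 ⟨⟨j, by simpa [chainSegs_cons_cons] using hj'⟩, hz'⟩)
        h.head_notMem
  · simpa [chainSegs_cons_cons] using h.2.2 i j (by omega)
      (by simpa [chainSegs_cons_cons] using hi) hj'

lemma isSimpleChain_cons_cons {p q : Pt} {t : List Pt} :
    IsSimpleChain (p :: q :: t) ↔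
      p ≠ q ∧ (∀ z ∈ segment ℝ p q, z ∈ chainSet (q :: t) → z = q) ∧
        (t ≠ [] → IsSimpleChain (q :: t)) := by
  refine ⟨fun h => ⟨(List.nodup_cons.1 h.2.1).1 ∘ (· ▸ List.mem_cons_self),
    fun _ => h.eq_of_mem_segment, h.tail⟩, fun ⟨hpq, hmeet, h⟩ => ?_⟩
  obtain _ | ⟨r, t⟩ := t
  · refine ⟨by simp, by simpa using hpq, fun i j hij _ hj => ?_⟩
    simp only [chainSegs, List.tail_cons, List.zip_cons_cons, List.zip_nil_right,
      List.length_singleton] at hj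
    omega
  · exact (h (by simp)).cons hpq hmeet

lemma IsSimpleChain.of_append {p q : Pt} {t : List Pt} :
    ∀ {s : List Pt}, IsSimpleChain (s ++ p :: q :: t) → IsSimpleChain (p :: q :: t)
  | [], h => h
  | [_], h => h.tail (by simp)
  | _ :: b :: s, h => IsSimpleChain.of_append (s := b :: s) (h.tail (by simp))

lemma IsSimpleChain.sbtw_of_collinear {p q r : Pt} {t : List Pt}
    (h : IsSimpleChain (p :: q :: r :: t)) (hpqr : Collinear ℝ {p, q, r}) : Sbtw ℝ p q r := by
  obtain ⟨hpq, hmeet, htail⟩ := isSimpleChain_cons_cons.1 h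
  have hqr : q ≠ r := (isSimpleChain_cons_cons.1 (htail (by simp))).1
  refine ⟨?_, hpq.symm, hqr⟩
  simp only [chainSet_cons_cons] at hmeet
  rcases hpqr.wbtw_or_wbtw_or_wbtw with hw | hw | hw
  · exact hw
  · have hr := hmeet r (mem_segment_iff_wbtw.2 hw.symm) (.inl (right_mem_segment ℝ q r))
    exact absurd hr hqr.symm
  · exact absurd (hmeet p (left_mem_segment ℝ p q) (.inl (mem_segment_iff_wbtw.2 hw.symm))) hpq

lemma genuineBends_iff_forall_eq_append {l : List Pt} :
    GenuineBends l ↔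
      ∀ s p q r t, l = s ++ p :: q :: r :: t → ¬ Collinear ℝ ({p, q, r} : Set Pt) := by
  constructor
  · rintro h s p q r t rfl
    simpa [List.getElem_append_right] using h s.length (by simp)
  · intro h i hi
    refine h (l.take i) _ _ _ (l.drop (i + 3)) ?_
    simp only [List.get_eq_getElem]
    rw [List.getElem_cons_drop, List.getElem_cons_drop, List.getElem_cons_drop,
      List.take_append_drop]

lemma GenuineBends.reverse {l : List Pt} (h : GenuineBends l) : GenuineBends l.reverse := by
  rw [genuineBends_iff_forall_eq_append] at h ⊢
  intro s p q r t hl hc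
  refine h t.reverse r q p s.reverse ?_ ?_
  · simpa using congrArg List.reverse hl
  · rwa [insert_comm, pair_comm p, insert_comm q] at hc

/-! ### Subdivisions -/

lemma segment_union_segment_of_wbtw {E : Type*} [AddCommGroup E] [Module ℝ E] {p q r : E}
    (h : Wbtw ℝ p q r) :
    segment ℝ p q ∪ segment ℝ q r = segment ℝ p r := by
  have hq := mem_segment_iff_wbtw.2 h
  refine (union_subset ?_ ?_).antisymm fun z hz => ?_
  · exact (convex_segment p r).segment_subset (left_mem_segment ℝ p r) hq
  · exact (convex_segment p r).segment_subset hq (right_mem_segment ℝ p r)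
  · have hz := mem_segment_iff_wbtw.1 hz
    simp only [mem_union, mem_segment_iff_wbtw]
    have hcomparable : Wbtw ℝ p z q ∨ Wbtw ℝ p q z := by
      obtain ⟨⟨a, ha, rfl⟩, ⟨b, hb, rfl⟩⟩ := And.intro hz h
      exact wbtw_or_wbtw_smul_vadd_of_nonneg p (r -ᵥ p) ha.1 hb.1
    exact hcomparable.imp_right hz.trans_left_right

/-- `InsertsCorner l L`: the chain `L` arises from `l` by inserting one further corner in the
interior of one of its segments. -/
inductive InsertsCorner : List Pt → List Pt → Prop
  | intro (s t : List Pt) {p m q : Pt} (h : Sbtw ℝ p m q) :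
    InsertsCorner (s ++ p :: q :: t) (s ++ p :: m :: q :: t)

/-- `IsSubdivision l L`: the chain `L` describes the same path as `l`, but may have additional
flat corners. -/
def IsSubdivision : List Pt → List Pt → Prop := Relation.ReflTransGen InsertsCorner

namespace InsertsCorner

variable {l L : List Pt}

lemma cons (h : InsertsCorner l L) (a : Pt) : InsertsCorner (a :: l) (a :: L) := by
  obtain ⟨s, t, h⟩ := h
  exact intro (a :: s) t h

lemma reverse (h : InsertsCorner l L) : InsertsCorner l.reverse L.reverse := by
  obtain ⟨s, t, h⟩ := h
  simpa using intro t.reverse s.reverse h.symm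

lemma sublist (h : InsertsCorner l L) : l.Sublist L := by
  obtain ⟨s, t, h⟩ := h
  exact ((List.sublist_cons_self _ _).cons_cons _).append_left s

lemma head?_eq (h : InsertsCorner l L) : l.head? = L.head? := by
  obtain ⟨_ | ⟨a, s⟩, t, h⟩ := h <;> rfl

lemma chainSet_eq (h : InsertsCorner l L) : chainSet l = chainSet L := by
  obtain @⟨s, t, p, m, q, h⟩ := h
  rw [chainSet_append_cons p (q :: t), chainSet_append_cons p (m :: q :: t), chainSet_cons_cons,
    chainSet_cons_cons, chainSet_cons_cons, ← segment_union_segment_of_wbtw h.wbtw, union_assoc]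

lemma isChain_iff {R : Pt → Pt → Prop}
    (hR : ∀ p m q, Sbtw ℝ p m q → (R p q ↔ R p m ∧ R m q)) (h : InsertsCorner l L) :
    l.IsChain R ↔ L.IsChain R := by
  obtain ⟨s, t, h⟩ := h
  simp only [List.isChain_append_cons_cons, List.isChain_cons_cons, hR _ _ _ h, and_assoc]

end InsertsCorner

lemma isSimpleChain_cons_cons_cons_iff_of_sbtw {p m q : Pt} {t : List Pt} (h : Sbtw ℝ p m q) :
    IsSimpleChain (p :: q :: t) ↔ IsSimpleChain (p :: m :: q :: t) := by
  rw [isSimpleChain_cons_cons, isSimpleChain_cons_cons (q := m),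
    isSimpleChain_cons_cons (p := m), chainSet_cons_cons m, ← segment_union_segment_of_wbtw h.wbtw]
  constructor
  · rintro ⟨-, hmeet, ht⟩
    refine ⟨h.left_ne, ?_, fun _ => ⟨h.ne_right, fun z hz => hmeet z (.inr hz), ht⟩⟩
    rintro z hz (hz' | hz')
    · have hpmz := h.wbtw.trans_right_left (mem_segment_iff_wbtw.1 hz')
      exact (mem_segment_iff_wbtw.1 hz).swap_right_iff.1 hpmz
    · obtain rfl := hmeet z (.inl hz) hz'
      exact absurd (h.wbtw.swap_right_iff.1 (mem_segment_iff_wbtw.1 hz)) h.ne_right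
  · rintro ⟨-, hmeet, htail⟩
    obtain ⟨-, hmeet', ht⟩ := htail (List.cons_ne_nil q t)
    refine ⟨h.left_ne_right, ?_, ht⟩
    rintro z (hz | hz) hz'
    · obtain rfl := hmeet z hz (.inr hz')
      exact hmeet' z (left_mem_segment ℝ _ _) hz'
    · exact hmeet' z hz hz'

lemma InsertsCorner.isSimpleChain_iff {l L : List Pt} (h : InsertsCorner l L) :
    IsSimpleChain l ↔ IsSimpleChain L := by
  obtain ⟨s, t, h⟩ := h
  induction s with
  | nil => exact isSimpleChain_cons_cons_cons_iff_of_sbtw h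
  | cons a s ih =>
    have hset := (InsertsCorner.intro s t h).chainSet_eq
    obtain _ | ⟨b, s⟩ := s <;>
      simp only [List.nil_append, List.cons_append] at ih hset ⊢ <;>
      simp [isSimpleChain_cons_cons (p := a), ih, hset]

namespace IsSubdivision

variable {l L M : List Pt}

lemma refl (l : List Pt) : IsSubdivision l l :=
  Relation.ReflTransGen.refl

lemma trans (h : IsSubdivision l L) (h' : IsSubdivision L M) : IsSubdivision l M :=
  Relation.ReflTransGen.trans h h'

lemma cons (h : IsSubdivision l L) (a : Pt) : IsSubdivision (a :: l) (a :: L) :=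
  Relation.ReflTransGen.lift (a :: ·) (fun _ _ (h : InsertsCorner _ _) => h.cons a) _ _ h

lemma reverse (h : IsSubdivision l L) : IsSubdivision l.reverse L.reverse :=
  Relation.ReflTransGen.lift List.reverse (fun _ _ (h : InsertsCorner _ _) => h.reverse) _ _ h

lemma sublist (h : IsSubdivision l L) : l.Sublist L := by
  induction h with
  | refl => exact List.Sublist.refl l
  | tail _ h ih => exact ih.trans h.sublist

lemma head?_eq (h : IsSubdivision l L) : l.head? = L.head? := by
  induction h with
  | refl => rfl
  | tail _ h ih => exact ih.trans h.head?_eq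

lemma getLast?_eq (h : IsSubdivision l L) : l.getLast? = L.getLast? := by
  simpa using h.reverse.head?_eq

lemma chainSet_eq (h : IsSubdivision l L) : chainSet l = chainSet L := by
  induction h with
  | refl => rfl
  | tail _ h ih => exact ih.trans h.chainSet_eq

lemma isSimpleChain_iff (h : IsSubdivision l L) : IsSimpleChain l ↔ IsSimpleChain L := by
  induction h with
  | refl => rfl
  | tail _ h ih => exact ih.trans h.isSimpleChain_iff

lemma isChain_iff {R : Pt → Pt → Prop}
    (hR : ∀ p m q, Sbtw ℝ p m q → (R p q ↔ R p m ∧ R m q)) (h : IsSubdivision l L) :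
    l.IsChain R ↔ L.IsChain R := by
  induction h with
  | refl => rfl
  | tail _ h ih => exact ih.trans (h.isChain_iff hR)

lemma isMonoChain_iff (h : IsSubdivision l L) : IsMonoChain l ↔ IsMonoChain L := by
  have hsnd {p m q : Pt} (h : Sbtw ℝ p m q) : Wbtw ℝ p.2 m.2 q.2 :=
    h.wbtw.map (LinearMap.snd ℝ ℝ ℝ).toAffineMap
  simp only [isMonoChain_iff_isChain]
  refine or_congr (h.isChain_iff fun p m q hs => ?_) (h.isChain_iff fun p m q hs => ?_)
  · exact ⟨fun hpq => (wbtw_iff_of_le hpq).1 (hsnd hs), fun h => h.1.trans h.2⟩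
  · exact ⟨fun hpq => ((wbtw_iff_of_le hpq).1 (hsnd hs).symm).symm, fun h => h.2.trans h.1⟩

end IsSubdivision

lemma IsSimpleChain.exists_genuineBends {L : List Pt} (hL : IsSimpleChain L) :
    ∃ l, GenuineBends l ∧ IsSubdivision l L := by
  induction hn : L.length using Nat.strong_induction_on generalizing L with
  | _ n ih =>
    by_cases hg : GenuineBends L
    · exact ⟨L, hg, .refl L⟩
    simp only [genuineBends_iff_forall_eq_append, not_forall, not_not] at hg
    obtain ⟨s, p, q, r, t, rfl, hpqr⟩ := hg
    have hins := InsertsCorner.intro s t (hL.of_append.sbtw_of_collinear hpqr)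
    obtain ⟨l, hl, hsub⟩ := ih _ (by simp [← hn]) (hins.isSimpleChain_iff.2 hL) rfl
    exact ⟨l, hl, hsub.tail hins⟩

/-! ### Lattice paths -/

/-- The inclusion of the lattice `ℤ × ℤ` in the plane. -/
def toPt (a : ℤ × ℤ) : Pt := (a.1, a.2)

lemma toPt_injective : Function.Injective toPt := fun a b h => by
  simpa [toPt, Prod.ext_iff] using h

lemma IsIntPt.exists_toPt {p : Pt} (h : IsIntPt p) : ∃ a, toPt a = p :=
  let ⟨⟨x, hx⟩, ⟨y, hy⟩⟩ := h
  ⟨(x, y), Prod.ext hx.symm hy.symm⟩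

lemma isIntPt_toPt (a : ℤ × ℤ) : IsIntPt (toPt a) := ⟨⟨a.1, rfl⟩, ⟨a.2, rfl⟩⟩

/-- A step of length at most one to the right. Stationary steps are allowed, so that a lattice
point counts as a degenerate lattice edge. -/
def HStep (a b : ℤ × ℤ) : Prop := a.2 = b.2 ∧ a.1 ≤ b.1 ∧ b.1 ≤ a.1 + 1

/-- A unit step upwards. -/
def VStep (a b : ℤ × ℤ) : Prop := a.1 = b.1 ∧ b.2 = a.2 + 1

/-- A step to the right or upwards. -/
def UnitStep (a b : ℤ × ℤ) : Prop := HStep a b ∨ VStep a b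

/-- Equal or neighbouring lattice points. The chains of this relation are the lattice paths. -/
def LatticeAdj (a b : ℤ × ℤ) : Prop := UnitStep a b ∨ UnitStep b a

lemma LatticeAdj.refl (a : ℤ × ℤ) : LatticeAdj a a := .inl (.inl ⟨rfl, le_rfl, by omega⟩)

lemma LatticeAdj.symm {a b : ℤ × ℤ} (h : LatticeAdj a b) : LatticeAdj b a := Or.symm h

lemma segment_eq_uIcc_of_axisParallel {p q : Pt} (h : p.1 = q.1 ∨ p.2 = q.2) :
    segment ℝ p q = uIcc p q := by
  obtain ⟨p₁, p₂⟩ := p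
  obtain ⟨q₁, q₂⟩ := q
  rw [uIcc_prod_eq]
  rcases h with rfl | rfl
  · rw [← Prod.image_mk_segment_right, segment_eq_uIcc, uIcc_self, singleton_prod]
  · rw [← Prod.image_mk_segment_left, segment_eq_uIcc, uIcc_self, prod_singleton]

lemma sbtw_toPt {a b c : ℤ × ℤ} (hab : a.1 = b.1 ∨ a.2 = b.2) (hc : c ∈ uIcc a b) (hca : c ≠ a)
    (hcb : c ≠ b) : Sbtw ℝ (toPt a) (toPt c) (toPt b) := by
  refine ⟨mem_segment_iff_wbtw.1 ?_, toPt_injective.ne hca, toPt_injective.ne hcb⟩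
  rw [segment_eq_uIcc_of_axisParallel (by simpa [toPt] using hab)]
  rw [uIcc_prod_eq] at hc ⊢
  simp only [mem_prod, mem_uIcc, toPt] at hc ⊢
  exact_mod_cast hc

lemma exists_latticeAdj_sbtw {a b : ℤ × ℤ} (hab : a.1 = b.1 ∨ a.2 = b.2)
    (hadj : ¬ LatticeAdj a b) :
    ∃ c, LatticeAdj a c ∧ (c.1 = b.1 ∨ c.2 = b.2) ∧ Sbtw ℝ (toPt a) (toPt c) (toPt b) ∧
      (b.1 - c.1).natAbs + (b.2 - c.2).natAbs < (b.1 - a.1).natAbs + (b.2 - a.2).natAbs := by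
  have step : ∀ c, LatticeAdj a c → (c.1 = b.1 ∨ c.2 = b.2) → c ∈ uIcc a b → c ≠ a →
      ∃ c, LatticeAdj a c ∧ (c.1 = b.1 ∨ c.2 = b.2) ∧ Sbtw ℝ (toPt a) (toPt c) (toPt b) ∧
        (b.1 - c.1).natAbs + (b.2 - c.2).natAbs < (b.1 - a.1).natAbs + (b.2 - a.2).natAbs := by
    intro c hac hcb hc hca
    refine ⟨c, hac, hcb, sbtw_toPt hab hc hca fun h => hadj (h ▸ hac), ?_⟩
    simp only [uIcc_prod_eq, mem_prod, mem_uIcc, ne_eq, Prod.ext_iff] at hc hca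
    omega
  obtain ⟨a₁, a₂⟩ := a
  obtain ⟨b₁, b₂⟩ := b
  obtain rfl | rfl : a₁ = b₁ ∨ a₂ = b₂ := hab
  · rcases lt_trichotomy a₂ b₂ with h | rfl | h
    · exact step (a₁, a₂ + 1) (by simp [LatticeAdj, UnitStep, VStep]) (.inl rfl)
        (by simp only [uIcc_prod_eq, mem_prod, mem_uIcc]; omega) (by simp)
    · exact absurd (.refl _) hadj
    · exact step (a₁, a₂ - 1) (by simp [LatticeAdj, UnitStep, VStep]) (.inl rfl)
        (by simp only [uIcc_prod_eq, mem_prod, mem_uIcc]; omega) (by simp)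
  · rcases lt_trichotomy a₁ b₁ with h | rfl | h
    · exact step (a₁ + 1, a₂) (by simp [LatticeAdj, UnitStep, HStep]) (.inr rfl)
        (by simp only [uIcc_prod_eq, mem_prod, mem_uIcc]; omega) (by simp)
    · exact absurd (.refl _) hadj
    · exact step (a₁ - 1, a₂) (by simp [LatticeAdj, UnitStep, HStep]) (.inr rfl)
        (by simp only [uIcc_prod_eq, mem_prod, mem_uIcc]; omega) (by simp)

lemma exists_isChain_isSubdivision_cons {b : ℤ × ℤ} {P : List (ℤ × ℤ)}
    (hP : (b :: P).IsChain LatticeAdj) {a : ℤ × ℤ} (hab : a.1 = b.1 ∨ a.2 = b.2) :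
    ∃ Q, (a :: Q).IsChain LatticeAdj ∧
      IsSubdivision ((a :: b :: P).map toPt) ((a :: Q).map toPt) := by
  induction hn : (b.1 - a.1).natAbs + (b.2 - a.2).natAbs using Nat.strong_induction_on
    generalizing a with
  | _ n ih =>
    by_cases hadj : LatticeAdj a b
    · exact ⟨b :: P, List.isChain_cons_cons.2 ⟨hadj, hP⟩, .refl _⟩
    obtain ⟨c, hac, hcb, hbtw, hlt⟩ := exists_latticeAdj_sbtw hab hadj
    obtain ⟨Q, hQ, hsub⟩ := ih _ (hn ▸ hlt) hcb rfl
    exact ⟨c :: Q, List.isChain_cons_cons.2 ⟨hac, hQ⟩,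
      (hsub.cons (toPt a)).head (InsertsCorner.intro [] (P.map toPt) hbtw)⟩

lemma IsOrthoChain.exists_isSubdivision {l : List Pt} (hl : IsOrthoChain l)
    (hint : ∀ p ∈ l, IsIntPt p) :
    ∃ P : List (ℤ × ℤ), P.IsChain LatticeAdj ∧ IsSubdivision l (P.map toPt) := by
  rw [isOrthoChain_iff_isChain] at hl
  induction l with
  | nil => exact ⟨[], .nil, .refl _⟩
  | cons p l ih =>
    obtain ⟨a, rfl⟩ := (hint p (by simp)).exists_toPt
    obtain _ | ⟨q, l⟩ := l
    · exact ⟨[a], .singleton a, .refl _⟩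
    obtain ⟨haq, hl⟩ := List.isChain_cons_cons.1 hl
    obtain ⟨_ | ⟨b, P⟩, hP, hsub⟩ := ih hl fun p hp => hint p (List.mem_cons_of_mem _ hp)
    · simpa using hsub.head?_eq
    obtain rfl : q = toPt b := by simpa using hsub.head?_eq
    obtain ⟨Q, hQ, hsub'⟩ :=
      exists_isChain_isSubdivision_cons hP (a := a) (by simpa [toPt] using haq)
    exact ⟨a :: Q, hQ, (hsub.cons (toPt a)).trans hsub'⟩

/-! ### Row-monotone maps of the lattice -/

/-- A map of the lattice that keeps every point in its row and weakly preserves the left-to-right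
order within each row. Contracting the vertex segments of a flat drawing is such a map. -/
structure RowMono (f : ℤ × ℤ → ℤ × ℤ) : Prop where
  snd_eq : ∀ a, (f a).2 = a.2
  fst_le : ∀ {a b}, a.2 = b.2 → a.1 ≤ b.1 → (f a).1 ≤ (f b).1

/-- The harmless ways in which the straight images under `f` of two lattice edges `e` and `e'` can
share the point `z`: either `z` is the image of an end of each edge, or the images coincide. -/
def MeetsProperly (f : ℤ × ℤ → ℤ × ℤ) (e e' : Sym2 (ℤ × ℤ)) (z : Pt) : Prop :=
  (∃ p ∈ e, ∃ q ∈ e', toPt (f p) = z ∧ toPt (f q) = z) ∨ e.map f = e'.map f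

lemma MeetsProperly.symm {f : ℤ × ℤ → ℤ × ℤ} {e e' : Sym2 (ℤ × ℤ)} {z : Pt}
    (h : MeetsProperly f e e' z) : MeetsProperly f e' e z :=
  h.imp (fun ⟨p, hp, q, hq, hpz, hqz⟩ => ⟨q, hq, p, hp, hqz, hpz⟩) Eq.symm

lemma exists_mem_of_sym2Map_eq {α β : Type*} {f : α → β} {e e' : Sym2 α} (h : e.map f = e'.map f)
    {p : α} (hp : p ∈ e) : ∃ q ∈ e', f q = f p :=
  Sym2.mem_map.1 (h ▸ Sym2.mem_map.2 ⟨p, hp, rfl⟩)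

lemma eq_of_convexCombination_eq {𝕜 : Type*} [Field 𝕜] [LinearOrder 𝕜] [IsStrictOrderedRing 𝕜]
    {x x' y y' t : 𝕜} (hx : x ≤ x') (hy : y ≤ y') (ht₀ : 0 ≤ t) (ht₁ : t ≤ 1)
    (h : (1 - t) * x + t * y = (1 - t) * x' + t * y') :
    (t = 1 ∨ x = x') ∧ (t = 0 ∨ y = y') := by
  have hx' : 0 ≤ (1 - t) * (x' - x) := mul_nonneg (by linarith) (by linarith)
  have hy' : 0 ≤ t * (y' - y) := mul_nonneg ht₀ (by linarith)
  have hx0 : (1 - t) * (x' - x) = 0 := by linarith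
  have hy0 : t * (y' - y) = 0 := by linarith
  exact ⟨(mul_eq_zero.1 hx0).imp (by intro; linarith) (by intro; linarith),
    (mul_eq_zero.1 hy0).imp_right (by intro; linarith)⟩

namespace RowMono

variable {f : ℤ × ℤ → ℤ × ℤ} {a b c d : ℤ × ℤ} {z : Pt}

lemma toPt_eq_of_squeeze (hf : RowMono f) (hrow : a.2 = b.2) (hab : a.1 ≤ b.1)
    (hz : z.2 = a.2) (hza : z.1 ≤ (f a).1) (hbz : (f b).1 ≤ z.1) :
    toPt (f a) = z ∧ toPt (f b) = z := by
  have hle : ((f a).1 : ℝ) ≤ (f b).1 := by exact_mod_cast hf.fst_le hrow hab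
  refine ⟨Prod.ext ?_ ?_, Prod.ext ?_ ?_⟩ <;> simp only [toPt, hf.snd_eq]
  · linarith
  · exact hz.symm
  · linarith
  · rw [hz, hrow]

lemma mem_segment_of_hStep (hf : RowMono f) (h : HStep a b)
    (hz : z ∈ segment ℝ (toPt (f a)) (toPt (f b))) :
    z.2 = a.2 ∧ (f a).1 ≤ z.1 ∧ z.1 ≤ (f b).1 := by
  have hle : ((f a).1 : ℝ) ≤ (f b).1 := by exact_mod_cast hf.fst_le h.1 h.2.1
  rw [segment_eq_uIcc_of_axisParallel (.inr (by simp [toPt, hf.snd_eq, h.1])), uIcc_prod_eq] at hz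
  simpa [toPt, hf.snd_eq, h.1, hle, and_comm] using hz

lemma exists_of_mem_segment_of_vStep (hf : RowMono f) (h : VStep a b)
    (hz : z ∈ segment ℝ (toPt (f a)) (toPt (f b))) :
    ∃ t : ℝ, 0 ≤ t ∧ t ≤ 1 ∧ z.1 = (1 - t) * (f a).1 + t * (f b).1 ∧ z.2 = a.2 + t := by
  obtain ⟨s, t, hs, ht, hst, rfl⟩ := hz
  obtain rfl : s = 1 - t := by linarith
  refine ⟨t, ht, by linarith, rfl, ?_⟩
  simp only [toPt, hf.snd_eq, h.2, Prod.snd_add, Prod.smul_snd, smul_eq_mul]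
  push_cast
  ring

lemma toPt_eq_of_vStep (hf : RowMono f) (h : VStep a b)
    (hz : z ∈ segment ℝ (toPt (f a)) (toPt (f b))) {p : ℤ × ℤ} (hp : p ∈ s(a, b))
    (hpz : z.2 = p.2) : toPt (f p) = z := by
  obtain ⟨t, -, -, hz₁, hz₂⟩ := hf.exists_of_mem_segment_of_vStep h hz
  refine Prod.ext ?_ (by simp only [toPt, hf.snd_eq, hpz])
  rcases Sym2.mem_iff.1 hp with rfl | rfl
  · obtain rfl : t = 0 := by linarith
    simp [toPt, hz₁]
  · obtain rfl : t = 1 := by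
      rw [hpz, h.2] at hz₂
      push_cast at hz₂
      linarith
    simp [toPt, hz₁]

lemma meetsProperly_of_hStep_of_hStep (hf : RowMono f) (h : HStep a b) (h' : HStep c d)
    (hz : z ∈ segment ℝ (toPt (f a)) (toPt (f b)))
    (hz' : z ∈ segment ℝ (toPt (f c)) (toPt (f d))) :
    MeetsProperly f s(a, b) s(c, d) z := by
  obtain ⟨hza, haz, hzb⟩ := hf.mem_segment_of_hStep h hz
  obtain ⟨hzc, hcz, hzd⟩ := hf.mem_segment_of_hStep h' hz'
  have hac : a.2 = c.2 := by exact_mod_cast hza.symm.trans hzc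
  obtain ⟨hab, hab₁, hab₂⟩ := h
  obtain ⟨hcd, hcd₁, hcd₂⟩ := h'
  obtain hbc | hda | ⟨hac₁, hbd₁⟩ : b.1 ≤ c.1 ∨ d.1 ≤ a.1 ∨ a.1 = c.1 ∧ b.1 = d.1 := by omega
  · exact .inl ⟨b, by simp, c, by simp,
      hf.toPt_eq_of_squeeze (by omega) hbc (hab ▸ hza) hzb hcz⟩
  · exact .inl ⟨a, by simp, d, by simp,
      (hf.toPt_eq_of_squeeze (by omega) hda (hcd ▸ hzc) hzd haz).symm⟩
  · obtain rfl : a = c := Prod.ext hac₁ hac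
    obtain rfl : b = d := Prod.ext hbd₁ (by omega)
    exact .inr rfl

lemma meetsProperly_of_hStep_of_vStep (hf : RowMono f) (h : HStep a b) (h' : VStep c d)
    (hz : z ∈ segment ℝ (toPt (f a)) (toPt (f b)))
    (hz' : z ∈ segment ℝ (toPt (f c)) (toPt (f d))) :
    MeetsProperly f s(a, b) s(c, d) z := by
  obtain ⟨hza, haz, hzb⟩ := hf.mem_segment_of_hStep h hz
  obtain ⟨q, hq, hqa⟩ : ∃ q ∈ s(c, d), q.2 = a.2 := by
    obtain ⟨t, ht₀, ht₁, -, hzc⟩ := hf.exists_of_mem_segment_of_vStep h' hz'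
    have hca : c.2 ≤ a.2 := by exact_mod_cast (by linarith : (c.2 : ℝ) ≤ a.2)
    have hac : a.2 ≤ c.2 + 1 := by exact_mod_cast (by linarith : (a.2 : ℝ) ≤ c.2 + 1)
    obtain hac | hac : a.2 = c.2 ∨ a.2 = c.2 + 1 := by omega
    · exact ⟨c, by simp, hac.symm⟩
    · exact ⟨d, by simp, h'.2.trans hac.symm⟩
  have hqz := hf.toPt_eq_of_vStep h' hz' hq (hqa ▸ hza)
  have hqz₁ : ((f q).1 : ℝ) = z.1 := congrArg Prod.fst hqz
  obtain ⟨hab, hab₁, hab₂⟩ := h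
  obtain hqa₁ | hbq₁ : q.1 ≤ a.1 ∨ b.1 ≤ q.1 := by omega
  · exact .inl ⟨a, by simp, q, hq,
      (hf.toPt_eq_of_squeeze hqa hqa₁ (hqa ▸ hza) hqz₁.ge haz).2, hqz⟩
  · exact .inl ⟨b, by simp, q, hq,
      (hf.toPt_eq_of_squeeze (by omega) hbq₁ (hab ▸ hza) hzb hqz₁.le).1, hqz⟩

lemma meetsProperly_of_vStep_of_vStep_of_eq (hf : RowMono f) (h : VStep a b) (h' : VStep c d)
    (hz : z ∈ segment ℝ (toPt (f a)) (toPt (f b)))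
    (hz' : z ∈ segment ℝ (toPt (f c)) (toPt (f d))) (hrow : a.2 = c.2) (hac : a.1 ≤ c.1) :
    MeetsProperly f s(a, b) s(c, d) z := by
  have hrow' : b.2 = d.2 := by rw [h.2, h'.2, hrow]
  have hbd : b.1 ≤ d.1 := h.1 ▸ h'.1 ▸ hac
  obtain ⟨t, ht₀, ht₁, hz₁, hz₂⟩ := hf.exists_of_mem_segment_of_vStep h hz
  obtain ⟨t', -, -, hz₁', hz₂'⟩ := hf.exists_of_mem_segment_of_vStep h' hz'
  obtain rfl : t = t' := by rw [hrow] at hz₂; linarith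
  obtain ⟨ha, hb⟩ := eq_of_convexCombination_eq (Int.cast_le.2 (hf.fst_le hrow hac))
    (Int.cast_le.2 (hf.fst_le hrow' hbd)) ht₀ ht₁ (hz₁.symm.trans hz₁')
  rcases ha with rfl | ha
  · have hzb : z.2 = b.2 := by rw [hz₂, h.2]; push_cast; rfl
    exact .inl ⟨b, by simp, d, by simp, hf.toPt_eq_of_vStep h hz (by simp) hzb,
      hf.toPt_eq_of_vStep h' hz' (by simp) (hrow' ▸ hzb)⟩
  rcases hb with rfl | hb
  · have hza : z.2 = a.2 := by rw [hz₂, add_zero]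
    exact .inl ⟨a, by simp, c, by simp, hf.toPt_eq_of_vStep h hz (by simp) hza,
      hf.toPt_eq_of_vStep h' hz' (by simp) (hrow ▸ hza)⟩
  have hfac : f a = f c := Prod.ext (Int.cast_injective ha) (by rw [hf.snd_eq, hf.snd_eq, hrow])
  have hfbd : f b = f d := Prod.ext (Int.cast_injective hb) (by rw [hf.snd_eq, hf.snd_eq, hrow'])
  exact .inr (by rw [Sym2.map_mk, Sym2.map_mk, hfac, hfbd])

lemma meetsProperly_of_vStep_of_vStep_of_lt (hf : RowMono f) (h : VStep a b) (h' : VStep c d)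
    (hz : z ∈ segment ℝ (toPt (f a)) (toPt (f b)))
    (hz' : z ∈ segment ℝ (toPt (f c)) (toPt (f d))) (hrow : a.2 < c.2) :
    MeetsProperly f s(a, b) s(c, d) z := by
  obtain ⟨t, -, ht₁, -, hz₂⟩ := hf.exists_of_mem_segment_of_vStep h hz
  obtain ⟨t', ht₀', -, -, hz₂'⟩ := hf.exists_of_mem_segment_of_vStep h' hz'
  have hb : (b.2 : ℝ) = a.2 + 1 := by exact_mod_cast h.2
  have hbc : (a.2 : ℝ) + 1 ≤ c.2 := by exact_mod_cast hrow
  exact .inl ⟨b, by simp, c, by simp, hf.toPt_eq_of_vStep h hz (by simp) (by linarith),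
    hf.toPt_eq_of_vStep h' hz' (by simp) (by linarith)⟩

lemma meetsProperly_of_vStep_of_vStep (hf : RowMono f) (h : VStep a b) (h' : VStep c d)
    (hz : z ∈ segment ℝ (toPt (f a)) (toPt (f b)))
    (hz' : z ∈ segment ℝ (toPt (f c)) (toPt (f d))) :
    MeetsProperly f s(a, b) s(c, d) z := by
  rcases lt_trichotomy a.2 c.2 with hrow | hrow | hrow
  · exact hf.meetsProperly_of_vStep_of_vStep_of_lt h h' hz hz' hrow
  · rcases le_total a.1 c.1 with hac | hca
    · exact hf.meetsProperly_of_vStep_of_vStep_of_eq h h' hz hz' hrow hac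
    · exact (hf.meetsProperly_of_vStep_of_vStep_of_eq h' h hz' hz hrow.symm hca).symm
  · exact (hf.meetsProperly_of_vStep_of_vStep_of_lt h' h hz' hz hrow).symm

lemma meetsProperly_of_unitStep (hf : RowMono f) (h : UnitStep a b) (h' : UnitStep c d)
    (hz : z ∈ segment ℝ (toPt (f a)) (toPt (f b)))
    (hz' : z ∈ segment ℝ (toPt (f c)) (toPt (f d))) :
    MeetsProperly f s(a, b) s(c, d) z := by
  rcases h with h | h <;> rcases h' with h' | h'
  · exact hf.meetsProperly_of_hStep_of_hStep h h' hz hz'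
  · exact hf.meetsProperly_of_hStep_of_vStep h h' hz hz'
  · exact (hf.meetsProperly_of_hStep_of_vStep h' h hz' hz).symm
  · exact hf.meetsProperly_of_vStep_of_vStep h h' hz hz'

lemma meetsProperly (hf : RowMono f) (h : LatticeAdj a b) (h' : LatticeAdj c d)
    (hz : z ∈ segment ℝ (toPt (f a)) (toPt (f b)))
    (hz' : z ∈ segment ℝ (toPt (f c)) (toPt (f d))) :
    MeetsProperly f s(a, b) s(c, d) z := by
  wlog hab : UnitStep a b generalizing a b
  · rw [Sym2.eq_swap]
    exact this h.symm (by rwa [segment_symm]) (h.resolve_left hab)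
  wlog hcd : UnitStep c d generalizing c d
  · rw [Sym2.eq_swap (a := c)]
    exact this h'.symm (by rwa [segment_symm]) (h'.resolve_left hcd)
  exact hf.meetsProperly_of_unitStep hab hcd hz hz'

lemma isSimpleChain_map (hf : RowMono f) :
    ∀ {P : List (ℤ × ℤ)}, P.IsChain LatticeAdj → (P.map f).Nodup → 2 ≤ P.length →
      IsSimpleChain (P.map (toPt ∘ f))
  | a :: b :: P, hP, hnd, _ => by
    obtain ⟨hab, hP⟩ := List.isChain_cons_cons.1 hP
    obtain ⟨ha, hnd⟩ := List.nodup_cons.1 hnd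
    have hne : ∀ c ∈ b :: P, f a ≠ f c := fun c hc h => ha (h ▸ List.mem_map_of_mem hc)
    refine isSimpleChain_cons_cons.2 ⟨toPt_injective.ne (hne b (by simp)), fun z hz hz' => ?_,
      fun hP' => hf.isSimpleChain_map hP hnd ?_⟩
    · obtain ⟨c, hc, d, hd, hcd, hz'⟩ := exists_mem_segment_of_mem_chainSet_map hP hz'
      have hmem : ∀ {q}, q ∈ s(c, d) → f a ≠ f q := fun hq =>
        (Sym2.mem_iff.1 hq).elim (· ▸ hne c hc) (· ▸ hne d hd)
      rcases hf.meetsProperly hab hcd hz hz' with ⟨p, hp, q, hq, rfl, hqp⟩ | himage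
      · rcases Sym2.mem_iff.1 hp with rfl | rfl
        · exact absurd (toPt_injective hqp.symm) (hmem hq)
        · rfl
      · obtain ⟨q, hq, hqa⟩ := exists_mem_of_sym2Map_eq himage (Sym2.mem_mk_left a b)
        exact absurd hqa.symm (hmem hq)
    · simpa [Nat.succ_le_iff, List.length_pos_iff] using hP'

end RowMono

/-! ### Contracting pairwise disjoint sets -/

section Contract

variable {ι α : Type*} {B : ι → Set α} {r : ι → α} {a b : α} {i : ι}

open Classical in
/-- The map that sends all points of `B i` to the representative `r i`, for every `i`, and fixes
all other points. It is meant for pairwise disjoint sets `B i`. -/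
noncomputable def contract (B : ι → Set α) (r : ι → α) (a : α) : α :=
  if h : ∃ i, a ∈ B i then r h.choose else a

lemma contract_of_mem (hB : Pairwise fun i j => Disjoint (B i) (B j)) (ha : a ∈ B i) :
    contract B r a = r i := by
  have h : ∃ i, a ∈ B i := ⟨i, ha⟩
  rw [contract, dif_pos h, hB.eq (not_disjoint_iff.2 ⟨a, h.choose_spec, ha⟩)]

lemma contract_of_forall_notMem (ha : ∀ i, a ∉ B i) : contract B r a = a :=
  dif_neg (not_exists.2 ha)

lemma eq_or_exists_mem_of_contract_eq (hB : Pairwise fun i j => Disjoint (B i) (B j))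
    (hr : ∀ i, r i ∈ B i) (h : contract B r a = contract B r b) :
    a = b ∨ ∃ i, a ∈ B i ∧ b ∈ B i := by
  by_cases ha : ∃ i, a ∈ B i <;> by_cases hb : ∃ i, b ∈ B i
  · obtain ⟨⟨i, hi⟩, ⟨j, hj⟩⟩ := And.intro ha hb
    rw [contract_of_mem hB hi, contract_of_mem hB hj] at h
    obtain rfl : i = j := hB.eq (not_disjoint_iff.2 ⟨r i, hr i, h ▸ hr j⟩)
    exact .inr ⟨i, hi, hj⟩
  · obtain ⟨i, hi⟩ := ha
    rw [contract_of_mem hB hi, contract_of_forall_notMem (not_exists.1 hb)] at h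
    exact absurd ⟨i, h ▸ hr i⟩ hb
  · obtain ⟨j, hj⟩ := hb
    rw [contract_of_mem hB hj, contract_of_forall_notMem (not_exists.1 ha)] at h
    exact absurd ⟨j, h ▸ hr j⟩ ha
  · rw [contract_of_forall_notMem (not_exists.1 ha),
      contract_of_forall_notMem (not_exists.1 hb)] at h
    exact .inl h

lemma contract_eq_iff_mem (hB : Pairwise fun i j => Disjoint (B i) (B j))
    (hr : ∀ i, r i ∈ B i) : contract B r a = r i ↔ a ∈ B i := by
  refine ⟨fun h => ?_, contract_of_mem hB⟩
  have h' : contract B r a = contract B r (r i) := h.trans (contract_of_mem hB (hr i)).symm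
  rcases eq_or_exists_mem_of_contract_eq hB hr h' with rfl | ⟨j, haj, hrj⟩
  · exact hr i
  · rwa [hB.eq (not_disjoint_iff.2 ⟨r i, hr i, hrj⟩)]

lemma rowMono_contract {B : ι → Set (ℤ × ℤ)} {r : ι → ℤ × ℤ}
    (hB : Pairwise fun i j => Disjoint (B i) (B j)) (hconn : ∀ i, (B i).OrdConnected)
    (hr : ∀ i, IsLeast (B i) (r i)) (hrow : ∀ i, ∀ a ∈ B i, a.2 = (r i).2) :
    RowMono (contract B r) := by
  have hsnd : ∀ a, (contract B r a).2 = a.2 := fun a => by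
    by_cases ha : ∃ i, a ∈ B i
    · obtain ⟨i, hi⟩ := ha
      rw [contract_of_mem hB hi, hrow i a hi]
    · rw [contract_of_forall_notMem (not_exists.1 ha)]
  have hfst : ∀ a, (contract B r a).1 ≤ a.1 := fun a => by
    by_cases ha : ∃ i, a ∈ B i
    · obtain ⟨i, hi⟩ := ha
      rw [contract_of_mem hB hi]
      exact ((hr i).2 hi).1
    · rw [contract_of_forall_notMem (not_exists.1 ha)]
  refine ⟨hsnd, fun {a b} h₂ h₁ => ?_⟩
  by_cases hb : ∃ j, b ∈ B j
  · obtain ⟨j, hj⟩ := hb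
    rw [contract_of_mem hB hj]
    rcases le_total a.1 (r j).1 with ha | ha
    · exact (hfst a).trans ha
    · rw [contract_of_mem hB ((hconn j).out (hr j).1 hj ⟨⟨ha, ?_⟩, h₁, h₂.le⟩)]
      rw [h₂, hrow j b hj]
  · rw [contract_of_forall_notMem (not_exists.1 hb)]
    exact (hfst a).trans h₁

end Contract

/-! ### Rerouting chains -/

/-- `IsRerouting f l L`: the chain `L` is obtained from `l` by splitting `l` into unit steps between
lattice points, moving these lattice points by `f`, and dropping the flat corners. -/
def IsRerouting (f : ℤ × ℤ → ℤ × ℤ) (l L : List Pt) : Prop :=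
  GenuineBends L ∧ ∃ P : List (ℤ × ℤ), P.IsChain LatticeAdj ∧ IsSubdivision l (P.map toPt) ∧
    IsSubdivision L (P.map (toPt ∘ f))

lemma toPt_mem_chainSet {l : List Pt} {P : List (ℤ × ℤ)} (hl : 2 ≤ l.length)
    (h : IsSubdivision l (P.map toPt)) {a : ℤ × ℤ} (ha : a ∈ P) : toPt a ∈ chainSet l :=
  h.chainSet_eq ▸
    mem_chainSet_of_mem (hl.trans h.sublist.length_le) (List.mem_map_of_mem ha)

lemma RowMono.isSimpleChain_map_of_injOn {f : ℤ × ℤ → ℤ × ℤ} (hf : RowMono f) {l : List Pt}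
    (hl : IsSimpleChain l) (hinj : InjOn f (toPt ⁻¹' chainSet l)) {P : List (ℤ × ℤ)}
    (hP : P.IsChain LatticeAdj) (h : IsSubdivision l (P.map toPt)) :
    IsSimpleChain (P.map (toPt ∘ f)) := by
  obtain ⟨hlen, hnd, -⟩ := h.isSimpleChain_iff.1 hl
  exact hf.isSimpleChain_map hP
    ((hnd.of_map _).map_on fun a ha b hb hab =>
      hinj (toPt_mem_chainSet hl.1 h ha) (toPt_mem_chainSet hl.1 h hb) hab)
    (by simpa using hlen)

lemma RowMono.exists_isRerouting {f : ℤ × ℤ → ℤ × ℤ} (hf : RowMono f) {l : List Pt}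
    (hl : IsSimpleChain l) (hortho : IsOrthoChain l) (hint : ∀ p ∈ l, IsIntPt p)
    (hinj : InjOn f (toPt ⁻¹' chainSet l)) : ∃ L, IsRerouting f l L := by
  obtain ⟨P, hP, h⟩ := hortho.exists_isSubdivision hint
  obtain ⟨L, hL, h'⟩ := (hf.isSimpleChain_map_of_injOn hl hinj hP h).exists_genuineBends
  exact ⟨L, hL, P, hP, h, h'⟩

namespace IsRerouting

variable {f : ℤ × ℤ → ℤ × ℤ} {l L : List Pt}

lemma isSimpleChain (h : IsRerouting f l L) (hf : RowMono f) (hl : IsSimpleChain l)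
    (hinj : InjOn f (toPt ⁻¹' chainSet l)) : IsSimpleChain L := by
  obtain ⟨-, P, hP, hlP, hLP⟩ := h
  exact hLP.isSimpleChain_iff.2 (hf.isSimpleChain_map_of_injOn hl hinj hP hlP)

lemma reverse (h : IsRerouting f l L) : IsRerouting f l.reverse L.reverse := by
  obtain ⟨hL, P, hP, hlP, hLP⟩ := h
  refine ⟨hL.reverse, P.reverse, List.isChain_reverse.2 (hP.imp fun _ _ => LatticeAdj.symm), ?_, ?_⟩
  · simpa using hlP.reverse
  · simpa using hLP.reverse

lemma head?_eq (h : IsRerouting f l L) {a : ℤ × ℤ} (ha : l.head? = some (toPt a)) :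
    L.head? = some (toPt (f a)) := by
  obtain ⟨-, P, -, hlP, hLP⟩ := h
  rw [hlP.head?_eq, List.head?_map, Option.map_eq_some_iff] at ha
  obtain ⟨b, hb, hba⟩ := ha
  rw [hLP.head?_eq, List.head?_map, hb, toPt_injective hba, Option.map_some, Function.comp_apply]

lemma getLast?_eq (h : IsRerouting f l L) {a : ℤ × ℤ} (ha : l.getLast? = some (toPt a)) :
    L.getLast? = some (toPt (f a)) := by
  simpa using h.reverse.head?_eq (by simpa using ha)

lemma exists_mem_segment (h : IsRerouting f l L) (hl : 2 ≤ l.length) {z : Pt}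
    (hz : z ∈ chainSet L) :
    ∃ c d, LatticeAdj c d ∧ (∀ p ∈ s(c, d), toPt p ∈ chainSet l) ∧
      z ∈ segment ℝ (toPt (f c)) (toPt (f d)) := by
  obtain ⟨-, P, hP, hlP, hLP⟩ := h
  rw [hLP.chainSet_eq] at hz
  obtain ⟨c, hc, d, hd, hcd, hz⟩ := exists_mem_segment_of_mem_chainSet_map hP hz
  refine ⟨c, d, hcd, fun p hp => ?_, hz⟩
  rcases Sym2.mem_iff.1 hp with rfl | rfl
  exacts [toPt_mem_chainSet hl hlP hc, toPt_mem_chainSet hl hlP hd]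

lemma exists_toPt_of_mem (h : IsRerouting f l L) (hl : 2 ≤ l.length) {p : Pt} (hp : p ∈ L) :
    ∃ a, toPt a ∈ chainSet l ∧ toPt (f a) = p := by
  obtain ⟨-, P, -, hlP, hLP⟩ := h
  obtain ⟨a, ha, rfl⟩ := List.mem_map.1 (hLP.sublist.subset hp)
  exact ⟨a, toPt_mem_chainSet hl hlP ha, rfl⟩

lemma exists_mem_chainSet_snd_eq (h : IsRerouting f l L) (hf : ∀ a, (f a).2 = a.2)
    (hl : 2 ≤ l.length) {p : Pt} (hp : p ∈ l) : ∃ z ∈ chainSet L, z.2 = p.2 := by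
  obtain ⟨-, P, -, hlP, hLP⟩ := h
  obtain ⟨a, ha, rfl⟩ := List.mem_map.1 (hlP.sublist.subset hp)
  refine ⟨toPt (f a), hLP.chainSet_eq ▸ mem_chainSet_of_mem ?_ (List.mem_map_of_mem ha), ?_⟩
  · simpa using hl.trans hlP.sublist.length_le
  · simp only [toPt, hf]

lemma isMonoChain (h : IsRerouting f l L) (hf : ∀ a, (f a).2 = a.2) (hl : IsMonoChain l) :
    IsMonoChain L := by
  obtain ⟨-, P, -, hlP, hLP⟩ := h
  have hsnd : (P.map (toPt ∘ f)).map Prod.snd = (P.map toPt).map Prod.snd := by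
    simp [toPt, hf]
  rw [hLP.isMonoChain_iff, IsMonoChain, hsnd]
  exact hlP.isMonoChain_iff.1 hl

end IsRerouting

/-! ### The contracted drawing -/

namespace OrthDrawing

variable {V : Type*} {G : SimpleGraph V} {D : OrthDrawing G}

/-- The lattice points of the box of `v`. -/
def cell (D : OrthDrawing G) (v : V) : Set (ℤ × ℤ) := toPt ⁻¹' (D.box v).pts

/-- The lower left corner of the box of `v`, as a lattice point. The floors only convert to `ℤ`,
since boxes of interest have integral corners. -/
noncomputable def leftEnd (D : OrthDrawing G) (v : V) : ℤ × ℤ := (⌊(D.box v).x1⌋, ⌊(D.box v).y1⌋)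

/-- The map of the lattice that contracts every box to its lower left corner. -/
noncomputable def contraction (D : OrthDrawing G) : ℤ × ℤ → ℤ × ℤ := contract D.cell D.leftEnd

lemma IsPlanar.pairwise_disjoint_cell (hpl : D.IsPlanar) :
    Pairwise fun u v => Disjoint (D.cell u) (D.cell v) :=
  fun u v huv => (hpl.1 u v huv).preimage toPt

lemma mk_mem_points (D : OrthDrawing G) (v : V) : ((D.box v).x1, (D.box v).y1) ∈ D.points :=
  .inl (mem_iUnion.2 ⟨v, .inl rfl⟩)

lemma mem_points_of_mem_chain {u v : V} (h : G.Adj u v) {p : Pt} (hp : p ∈ D.chain u v) :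
    p ∈ D.points :=
  .inr (mem_iUnion.2 ⟨u, mem_iUnion.2 ⟨v, mem_iUnion.2 ⟨h, hp⟩⟩⟩)

lemma IntCoords.toPt_leftEnd (hint : D.IntCoords) (v : V) :
    toPt (D.leftEnd v) = ((D.box v).x1, (D.box v).y1) := by
  obtain ⟨⟨x, hx⟩, ⟨y, hy⟩⟩ := hint _ (D.mk_mem_points v)
  simp only at hx hy
  simp [toPt, leftEnd, hx, hy]

lemma IntCoords.isLeast_leftEnd (hint : D.IntCoords) (v : V) :
    IsLeast (D.cell v) (D.leftEnd v) := by
  constructor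
  · rw [cell, mem_preimage, hint.toPt_leftEnd]
    exact ⟨left_mem_Icc.2 (D.box v).hx, left_mem_Icc.2 (D.box v).hy⟩
  · rintro a ⟨hx, hy⟩
    exact ⟨Int.cast_le.1 ((Int.floor_le _).trans hx.1), Int.cast_le.1 ((Int.floor_le _).trans hy.1)⟩

lemma IntCoords.leftEnd_mem_cell (hint : D.IntCoords) (v : V) : D.leftEnd v ∈ D.cell v :=
  (hint.isLeast_leftEnd v).1

lemma ordConnected_cell (D : OrthDrawing G) (v : V) : (D.cell v).OrdConnected := by
  refine OrdConnected.preimage_mono ?_ fun a b hab => ?_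
  · rw [Box.pts, Icc_prod_Icc]
    exact ordConnected_Icc
  · exact ⟨Int.cast_le.2 hab.1, Int.cast_le.2 hab.2⟩

lemma IsFlat.snd_eq_of_mem_cell (hflat : D.IsFlat) (hint : D.IntCoords) {v : V} {a : ℤ × ℤ}
    (ha : a ∈ D.cell v) : a.2 = (D.leftEnd v).2 := by
  have hy : (toPt (D.leftEnd v)).2 = (D.box v).y1 := by rw [hint.toPt_leftEnd]
  have hle : (toPt a).2 ≤ (D.box v).y1 := hflat v ▸ ha.2.2
  exact Int.cast_injective (hy ▸ hle.antisymm ha.2.1)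

lemma IsPlanar.rowMono_contraction (hpl : D.IsPlanar) (hflat : D.IsFlat) (hint : D.IntCoords) :
    RowMono D.contraction :=
  rowMono_contract hpl.pairwise_disjoint_cell D.ordConnected_cell hint.isLeast_leftEnd
    fun _ _ => hflat.snd_eq_of_mem_cell hint

lemma IsPlanar.contraction_of_mem_cell (hpl : D.IsPlanar) {v : V} {a : ℤ × ℤ}
    (ha : a ∈ D.cell v) : D.contraction a = D.leftEnd v :=
  contract_of_mem hpl.pairwise_disjoint_cell ha

lemma IsPlanar.two_le_length_chain (hpl : D.IsPlanar) {u v : V} (h : G.Adj u v) :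
    2 ≤ (D.chain u v).length :=
  (hpl.2.1 u v h).1.1

lemma IsPlanar.leftEnd_injective (hpl : D.IsPlanar) (hint : D.IntCoords) :
    Function.Injective D.leftEnd := fun v w h =>
  hpl.pairwise_disjoint_cell.eq <|
    not_disjoint_iff.2 ⟨_, hint.leftEnd_mem_cell v, h ▸ hint.leftEnd_mem_cell w⟩

lemma IsPlanar.mem_sym2_of_mem_cell (hpl : D.IsPlanar) {u v w : V} (h : G.Adj u v)
    {a : ℤ × ℤ} (ha : toPt a ∈ D.curve u v) (haw : a ∈ D.cell w) : w ∈ s(u, v) :=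
  Sym2.mem_iff.2 <| (hpl.2.2.2.1 u v w h ⟨ha, haw⟩).imp And.left And.left

lemma IsPlanar.injOn_contraction (hpl : D.IsPlanar) (hint : D.IntCoords) {u v : V}
    (h : G.Adj u v) : InjOn D.contraction (toPt ⁻¹' D.curve u v) := by
  intro a ha b hb hab
  rcases eq_or_exists_mem_of_contract_eq hpl.pairwise_disjoint_cell hint.leftEnd_mem_cell hab with
    hab | ⟨w, haw, hbw⟩
  · exact hab
  have huv := h.ne
  obtain ⟨hwu, ha'⟩ | ⟨hwv, ha'⟩ := hpl.2.2.2.1 u v w h ⟨ha, haw⟩ <;>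
    obtain ⟨hwu', hb'⟩ | ⟨hwv', hb'⟩ := hpl.2.2.2.1 u v w h ⟨hb, hbw⟩
  · exact toPt_injective (Option.some_injective _ (ha'.symm.trans hb'))
  · exact absurd (hwu.symm.trans hwv') huv
  · exact absurd (hwu'.symm.trans hwv) huv
  · exact toPt_injective (Option.some_injective _ (ha'.symm.trans hb'))

lemma IsPlanar.exists_mem_cell_of_head?_or_getLast? (hpl : D.IsPlanar) {u v : V} (h : G.Adj u v)
    {a : ℤ × ℤ}
    (ha : (D.chain u v).head? = some (toPt a) ∨ (D.chain u v).getLast? = some (toPt a)) :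
    ∃ w ∈ s(u, v), a ∈ D.cell w := by
  obtain ⟨p, q, l, hl, hp, hq⟩ := hpl.2.2.1 u v h
  rw [hl, List.head?_cons, ← List.cons_append, List.getLast?_concat, Option.some_inj,
    Option.some_inj] at ha
  rcases ha with rfl | rfl
  exacts [⟨u, Sym2.mem_mk_left u v, hp⟩, ⟨v, Sym2.mem_mk_right u v, hq⟩]

lemma IsPlanar.exists_common_end (hpl : D.IsPlanar) (hint : D.IntCoords) {u v x y : V}
    (h : G.Adj u v) (h' : G.Adj x y) (hne : s(u, v) ≠ s(x, y)) {a b : ℤ × ℤ}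
    (ha : toPt a ∈ D.curve u v) (hb : toPt b ∈ D.curve x y)
    (hab : D.contraction a = D.contraction b) :
    ∃ w, w ∈ s(u, v) ∧ w ∈ s(x, y) ∧ D.contraction a = D.leftEnd w := by
  rcases eq_or_exists_mem_of_contract_eq hpl.pairwise_disjoint_cell hint.leftEnd_mem_cell hab with
    rfl | ⟨w, haw, hbw⟩
  · obtain ⟨ha, hb⟩ := hpl.2.2.2.2 u v x y h h' hne ⟨ha, hb⟩
    obtain ⟨w, hw, haw⟩ := hpl.exists_mem_cell_of_head?_or_getLast? h ha
    obtain ⟨w', hw', haw'⟩ := hpl.exists_mem_cell_of_head?_or_getLast? h' hb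
    obtain rfl : w = w' := hpl.pairwise_disjoint_cell.eq (not_disjoint_iff.2 ⟨a, haw, haw'⟩)
    exact ⟨w, hw, hw', hpl.contraction_of_mem_cell haw⟩
  · exact ⟨w, hpl.mem_sym2_of_mem_cell h ha haw, hpl.mem_sym2_of_mem_cell h' hb hbw,
      hpl.contraction_of_mem_cell haw⟩

lemma curve_subset_convexHull_points {u v : V} (h : G.Adj u v) :
    D.curve u v ⊆ convexHull ℝ D.points :=
  chainSet_subset_of_convex (convex_convexHull ℝ _)
    fun _ hp => subset_convexHull ℝ _ (mem_points_of_mem_chain h hp)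

lemma IntCoords.toPt_leftEnd_mem_points (hint : D.IntCoords) (v : V) :
    toPt (D.leftEnd v) ∈ D.points :=
  hint.toPt_leftEnd v ▸ D.mk_mem_points v

lemma IsPlanar.exists_isRerouting (hpl : D.IsPlanar) (hflat : D.IsFlat) (hint : D.IntCoords)
    {u v : V} (h : G.Adj u v) :
    ∃ m, IsRerouting D.contraction (D.chain u v)
      (toPt (D.leftEnd u) :: (m ++ [toPt (D.leftEnd v)])) := by
  have hint' : ∀ p ∈ D.chain u v, IsIntPt p := fun p hp => hint p (mem_points_of_mem_chain h hp)
  obtain ⟨hsimple, hortho, -⟩ := hpl.2.1 u v h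
  obtain ⟨L, hL⟩ := (hpl.rowMono_contraction hflat hint).exists_isRerouting hsimple hortho hint'
    (hpl.injOn_contraction hint h)
  obtain ⟨p, q, l, hl, hp, hq⟩ := hpl.2.2.1 u v h
  obtain ⟨a, rfl⟩ := (hint' p (by simp [hl])).exists_toPt
  obtain ⟨b, rfl⟩ := (hint' q (by simp [hl])).exists_toPt
  have hhead : L.head? = some (toPt (D.leftEnd u)) :=
    hpl.contraction_of_mem_cell hp ▸ hL.head?_eq (by simp [hl])
  have hlast : L.getLast? = some (toPt (D.leftEnd v)) :=
    hpl.contraction_of_mem_cell hq ▸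
      hL.getLast?_eq (by rw [hl, ← List.cons_append, List.getLast?_concat])
  obtain ⟨t, rfl⟩ := List.head?_eq_some_iff.1 hhead
  obtain ⟨_ | ⟨x, m⟩, hm⟩ := List.getLast?_eq_some_iff.1 hlast
  · obtain ⟨huv, -⟩ := List.cons.inj hm
    exact absurd (hpl.leftEnd_injective hint (toPt_injective huv)) h.ne
  · obtain ⟨rfl, rfl⟩ := List.cons.inj hm
    exact ⟨m, hL⟩

end OrthDrawing

namespace PolylineDrawing

variable {V : Type*} {G : SimpleGraph V} {D : OrthDrawing G} {D' : PolylineDrawing G}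

/-- `D'.IsContractionOf D`: the poly-line drawing `D'` arises from the orthogonal drawing `D` by
contracting every vertex box to its lower left corner and rerouting the edges accordingly. -/
def IsContractionOf (D' : PolylineDrawing G) (D : OrthDrawing G) : Prop :=
  (∀ v, D'.pos v = toPt (D.leftEnd v)) ∧
    ∀ u v, G.Adj u v → IsRerouting D.contraction (D.chain u v) (D'.chain u v)

lemma exists_isContractionOf (hpl : D.IsPlanar) (hflat : D.IsFlat) (hint : D.IntCoords) :
    ∃ D' : PolylineDrawing G, D'.IsContractionOf D := by
  obtain ⟨bends, hsymm, hbends⟩ := exists_equivariant_choice (σ := List.reverse)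
    List.reverse_involutive List.reverse_nil
    (P := fun u v m => G.Adj u v → IsRerouting D.contraction (D.chain u v)
      (toPt (D.leftEnd u) :: (m ++ [toPt (D.leftEnd v)])))
    (fun u v m hm h => by
      rw [D.chain_symm u v]
      simpa using (hm h.symm).reverse)
    (fun u v => by
      by_cases h : G.Adj u v
      · exact (hpl.exists_isRerouting hflat hint h).imp fun _ hm _ => hm
      · exact ⟨[], (absurd · h)⟩)
  exact ⟨⟨fun v => toPt (D.leftEnd v), bends, hsymm⟩, fun _ => rfl,
    fun u v h => hbends u v h.ne h⟩

lemma mem_chain_iff {u v : V} {p : Pt} :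
    p ∈ D'.chain u v ↔ p = D'.pos u ∨ p ∈ D'.bends u v ∨ p = D'.pos v := by
  simp [chain]

lemma mem_points_of_mem_chain {u v : V} (h : G.Adj u v) {p : Pt} (hp : p ∈ D'.chain u v) :
    p ∈ D'.points := by
  rcases mem_chain_iff.1 hp with rfl | hp | rfl
  · exact .inl ⟨u, rfl⟩
  · exact .inr (mem_iUnion.2 ⟨u, mem_iUnion.2 ⟨v, mem_iUnion.2 ⟨h, hp⟩⟩⟩)
  · exact .inl ⟨v, rfl⟩

namespace IsContractionOf

lemma pos_injective (hD : D'.IsContractionOf D) (hpl : D.IsPlanar) (hint : D.IntCoords) :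
    Function.Injective D'.pos := by
  rw [funext hD.1]
  exact toPt_injective.comp (hpl.leftEnd_injective hint)

lemma pos_notMem_curve (hD : D'.IsContractionOf D) (hpl : D.IsPlanar) (hflat : D.IsFlat)
    (hint : D.IntCoords) {u v w : V} (h : G.Adj u v) (hw : w ∉ s(u, v)) :
    D'.pos w ∉ D'.curve u v := by
  intro hwc
  obtain ⟨a, b, hab, hcurve, hz⟩ := (hD.2 u v h).exists_mem_segment (hpl.two_le_length_chain h) hwc
  have hw' := hpl.contraction_of_mem_cell (hint.leftEnd_mem_cell w)
  have hz' : D'.pos w ∈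
      segment ℝ (toPt (D.contraction (D.leftEnd w))) (toPt (D.contraction (D.leftEnd w))) := by
    rw [hw', hD.1]
    exact left_mem_segment ℝ _ _
  obtain ⟨p, hp, hpw⟩ : ∃ p ∈ s(a, b), D.contraction p = D.leftEnd w := by
    rcases (hpl.rowMono_contraction hflat hint).meetsProperly hab (.refl _) hz hz' with
      ⟨p, hp, -, -, hpz, -⟩ | himage
    · exact ⟨p, hp, toPt_injective (hpz.trans (hD.1 w))⟩
    · obtain ⟨p, hp, hpw⟩ := exists_mem_of_sym2Map_eq himage.symm (Sym2.mem_mk_left _ _)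
      exact ⟨p, hp, hpw.trans hw'⟩
  have hpcell : p ∈ D.cell w :=
    (contract_eq_iff_mem hpl.pairwise_disjoint_cell hint.leftEnd_mem_cell).1 hpw
  exact hw (hpl.mem_sym2_of_mem_cell h (hcurve p hp) hpcell)

lemma curve_inter_curve_subset (hD : D'.IsContractionOf D) (hpl : D.IsPlanar) (hflat : D.IsFlat)
    (hint : D.IntCoords) {u v x y : V} (h : G.Adj u v) (h' : G.Adj x y)
    (hne : s(u, v) ≠ s(x, y)) :
    D'.curve u v ∩ D'.curve x y ⊆ D'.pos '' (({u, v} : Set V) ∩ ({x, y} : Set V)) := by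
  rintro z ⟨hz, hz'⟩
  obtain ⟨a, b, hab, hcurve, hz⟩ := (hD.2 u v h).exists_mem_segment (hpl.two_le_length_chain h) hz
  obtain ⟨c, d, hcd, hcurve', hz'⟩ :=
    (hD.2 x y h').exists_mem_segment (hpl.two_le_length_chain h') hz'
  have hcommon : ∀ p ∈ s(a, b), ∀ q ∈ s(c, d), D.contraction p = D.contraction q →
      ∃ w, w ∈ s(u, v) ∧ w ∈ s(x, y) ∧ D.contraction p = D.leftEnd w := fun p hp q hq =>
    hpl.exists_common_end hint h h' hne (hcurve p hp) (hcurve' q hq)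
  suffices ∃ w, w ∈ s(u, v) ∧ w ∈ s(x, y) ∧ toPt (D.leftEnd w) = z by
    obtain ⟨w, hw, hw', rfl⟩ := this
    exact ⟨w, ⟨Sym2.mem_iff.1 hw, Sym2.mem_iff.1 hw'⟩, hD.1 w⟩
  rcases (hpl.rowMono_contraction hflat hint).meetsProperly hab hcd hz hz' with
    ⟨p, hp, q, hq, rfl, hqp⟩ | himage
  · obtain ⟨w, hw, hw', hpw⟩ := hcommon p hp q hq (toPt_injective hqp.symm)
    exact ⟨w, hw, hw', hpw ▸ rfl⟩
  -- Two edges share at most one vertex, so the two ends have the same image.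
  obtain ⟨p, hp, hpa⟩ := exists_mem_of_sym2Map_eq himage (Sym2.mem_mk_left a b)
  obtain ⟨q, hq, hqb⟩ := exists_mem_of_sym2Map_eq himage (Sym2.mem_mk_right a b)
  obtain ⟨w, hw, hw', haw⟩ := hcommon a (Sym2.mem_mk_left a b) p hp hpa.symm
  obtain ⟨w₂, hw₂, hw₂', hbw₂⟩ := hcommon b (Sym2.mem_mk_right a b) q hq hqb.symm
  obtain rfl : w = w₂ := by
    by_contra hww₂
    exact hne (((Sym2.mem_and_mem_iff hww₂).1 ⟨hw, hw₂⟩).trans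
      ((Sym2.mem_and_mem_iff hww₂).1 ⟨hw', hw₂'⟩).symm)
  rw [haw, hbw₂, segment_same] at hz
  exact ⟨w, hw, hw', (mem_singleton_iff.1 hz).symm⟩

lemma isPlanar (hD : D'.IsContractionOf D) (hpl : D.IsPlanar) (hflat : D.IsFlat)
    (hint : D.IntCoords) : D'.IsPlanar :=
  ⟨hD.pos_injective hpl hint,
    fun u v h => ⟨(hD.2 u v h).isSimpleChain (hpl.rowMono_contraction hflat hint)
      (hpl.2.1 u v h).1 (hpl.injOn_contraction hint h), (hD.2 u v h).1⟩,
    fun _ _ _ h hwu hwv => hD.pos_notMem_curve hpl hflat hint h (by simp [hwu, hwv]),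
    fun _ _ _ _ => hD.curve_inter_curve_subset hpl hflat hint⟩

lemma exists_toPt_of_mem_points (hD : D'.IsContractionOf D) (hpl : D.IsPlanar)
    (hint : D.IntCoords) {p : Pt} (hp : p ∈ D'.points) :
    ∃ a, toPt a ∈ convexHull ℝ D.points ∧ toPt (D.contraction a) = p := by
  rcases hp with ⟨v, rfl⟩ | hp
  · refine ⟨D.leftEnd v, subset_convexHull ℝ _ (hint.toPt_leftEnd_mem_points v), ?_⟩
    rw [hpl.contraction_of_mem_cell (hint.leftEnd_mem_cell v), hD.1]
  · simp only [mem_iUnion] at hp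
    obtain ⟨u, v, h, hp⟩ := hp
    obtain ⟨a, ha, rfl⟩ := (hD.2 u v h).exists_toPt_of_mem (hpl.two_le_length_chain h)
      (mem_chain_iff.2 (.inr (.inl hp)))
    exact ⟨a, OrthDrawing.curve_subset_convexHull_points h ha, rfl⟩

lemma intCoords (hD : D'.IsContractionOf D) (hpl : D.IsPlanar) (hint : D.IntCoords) :
    D'.IntCoords := fun _ hp => by
  obtain ⟨a, -, rfl⟩ := hD.exists_toPt_of_mem_points hpl hint hp
  exact isIntPt_toPt _

lemma points_subset_convexHull (hD : D'.IsContractionOf D) (hpl : D.IsPlanar)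
    (hint : D.IntCoords) : D'.points ⊆ convexHull ℝ D.points := by
  intro p hp
  obtain ⟨a, ha, rfl⟩ := hD.exists_toPt_of_mem_points hpl hint hp
  by_cases hv : ∃ v, a ∈ D.cell v
  · obtain ⟨v, hv⟩ := hv
    rw [hpl.contraction_of_mem_cell hv]
    exact subset_convexHull ℝ _ (hint.toPt_leftEnd_mem_points v)
  · rwa [OrthDrawing.contraction, contract_of_forall_notMem (not_exists.1 hv)]

lemma exists_mem_convexHull_snd_eq (hD : D'.IsContractionOf D) (hpl : D.IsPlanar)
    (hflat : D.IsFlat) (hint : D.IntCoords) {p : Pt} (hp : p ∈ D.points) :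
    ∃ z ∈ convexHull ℝ D'.points, z.2 = p.2 := by
  rcases hp with hp | hp
  · obtain ⟨v, hp⟩ := mem_iUnion.1 hp
    have hpv : p.2 = (D.box v).y1 := by
      rcases hp with rfl | rfl | rfl | rfl
      exacts [rfl, (hflat v).symm, rfl, (hflat v).symm]
    refine ⟨D'.pos v, subset_convexHull ℝ _ (.inl ⟨v, rfl⟩), ?_⟩
    rw [hD.1, hint.toPt_leftEnd, hpv]
  · simp only [mem_iUnion] at hp
    obtain ⟨u, v, h, hp⟩ := hp
    obtain ⟨z, hz, hzp⟩ := (hD.2 u v h).exists_mem_chainSet_snd_eq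
      (hpl.rowMono_contraction hflat hint).snd_eq (hpl.two_le_length_chain h) hp
    exact ⟨z, chainSet_subset_of_convex (convex_convexHull ℝ _)
      (fun _ hq => subset_convexHull ℝ _ (mem_points_of_mem_chain h hq)) hz, hzp⟩

lemma isYMonotone (hD : D'.IsContractionOf D) (hpl : D.IsPlanar) (hflat : D.IsFlat)
    (hint : D.IntCoords) (hD' : D.IsYMonotone) : D'.IsYMonotone := fun u v h =>
  (hD.2 u v h).isMonoChain (hpl.rowMono_contraction hflat hint).snd_eq (hD' u v h)

lemma inWidth (hD : D'.IsContractionOf D) (hpl : D.IsPlanar) (hint : D.IntCoords) {w : ℕ}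
    (hw : D.InWidth w) : D'.InWidth w := by
  obtain ⟨x₀, hw⟩ := hw
  exact ⟨x₀, fun p hp => map_mem_Icc_of_mem_convexHull (LinearMap.fst ℝ ℝ ℝ) hw
    (hD.points_subset_convexHull hpl hint hp)⟩

lemma inHeight_iff (hD : D'.IsContractionOf D) (hpl : D.IsPlanar) (hflat : D.IsFlat)
    (hint : D.IntCoords) {h : ℕ} : D.InHeight h ↔ D'.InHeight h := by
  refine exists_congr fun y₀ => ⟨fun hy p hp => ?_, fun hy p hp => ?_⟩
  · exact map_mem_Icc_of_mem_convexHull (LinearMap.snd ℝ ℝ ℝ) hy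
      (hD.points_subset_convexHull hpl hint hp)
  · obtain ⟨z, hz, hzp⟩ := hD.exists_mem_convexHull_snd_eq hpl hflat hint hp
    exact hzp ▸ map_mem_Icc_of_mem_convexHull (LinearMap.snd ℝ ℝ ℝ) hy hz

lemma pos_fst_lt_pos_fst (hD : D'.IsContractionOf D) (hint : D.IntCoords) {v w : V}
    (hvw : (D.box v).x2 < (D.box w).x1) : (D'.pos v).1 < (D'.pos w).1 := by
  rw [hD.1, hD.1, hint.toPt_leftEnd, hint.toPt_leftEnd]
  exact (D.box v).hx.trans_lt hvw

end IsContractionOf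

end PolylineDrawing

theorem flatOrth_to_polyline_general {V : Type*} (G : SimpleGraph V)
    (D : OrthDrawing G) (hpl : D.IsPlanar) (hflat : D.IsFlat) (hint : D.IntCoords) :
    ∃ D' : PolylineDrawing G, D'.IsPlanar ∧ D'.IntCoords ∧
      (∀ v, (D'.pos v).2 = (D.box v).y1) ∧
      (∀ v w : V, (D.box v).y1 = (D.box w).y1 → (D.box v).x2 < (D.box w).x1 →
        (D'.pos v).1 < (D'.pos w).1) ∧
      (∀ w : ℕ, D.InWidth w → D'.InWidth w) ∧
      (D.IsYMonotone → D'.IsYMonotone) ∧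
      (∀ h : ℕ, D.InHeight h ↔ D'.InHeight h) := by
  obtain ⟨D', hD⟩ := PolylineDrawing.exists_isContractionOf hpl hflat hint
  have hrow : ∀ v, (D'.pos v).2 = (D.box v).y1 := fun v => by rw [hD.1, hint.toPt_leftEnd]
  exact ⟨D', hD.isPlanar hpl hflat hint, hD.intCoords hpl hint, hrow,
    fun _ _ _ => hD.pos_fst_lt_pos_fst hint, fun _ => hD.inWidth hpl hint,
    hD.isYMonotone hpl hflat hint, fun _ => hD.inHeight_iff hpl hflat hint⟩

/-- Any planar flat orthogonal drawing `D` of a finite simple graph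
`G` can be transformed into a planar poly-line drawing `D'` of `G` with the same
y-coordinates, the same left-to-right order in each row, and width no larger than the
width of `D`; moreover `D'` is y-monotone if `D` was, and `D'` has the same height
as `D`. -/
theorem flatOrth_to_polyline {V : Type} [Fintype V] (G : SimpleGraph V)
    (D : OrthDrawing G) (hpl : D.IsPlanar) (hflat : D.IsFlat) (hint : D.IntCoords) :
    ∃ D' : PolylineDrawing G, D'.IsPlanar ∧ D'.IntCoords ∧
      (∀ v, (D'.pos v).2 = (D.box v).y1) ∧
      (∀ v w : V, (D.box v).y1 = (D.box w).y1 → (D.box v).x2 < (D.box w).x1 →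
        (D'.pos v).1 < (D'.pos w).1) ∧
      (∀ w : ℕ, D.InWidth w → D'.InWidth w) ∧
      (D.IsYMonotone → D'.IsYMonotone) ∧
      (∀ h : ℕ, D.InHeight h ↔ D'.InHeight h) := by
  exact flatOrth_to_polyline_general G D hpl hflat hint
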